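/- arXiv:1212.0527 — 2 statements merged into one kernel-verified Lean document; each statement's English description precedes it below -/
import Mathlib

section
/- (Lyapunov–Schmidt reduction.) Under Conditions (A)–(D), let b = (Σ_j b_j²)^{1/2}, and for N ≥ 1 write B_{R,b} = B_{H_N}(R) × B_{H_N^⊥}(b) and 𝐁_{R,b} = (B_{R,b})^{ℤ₀}, where ℤ₀ is the set of non-positive integers. Then for any R > 0 and κ > 0 there is an integer N* ≥ 1 such that for any N ≥ N* one can find a constant C > 0 and a continuous mapping 𝒲₀ : 𝐁_{R,b} → H_N^⊥, 𝐔 = (𝐯,𝛙) ↦ w₀, with the following properties. (Lipschitz continuity) For any 𝐔_i = (𝐯_i,𝛙_i) ∈ 𝐁_{R,b}, i = 1,2: ‖𝒲₀(𝐔₁) − 𝒲₀(𝐔₂)‖ ≤ C sup_{j≤0} e^{κj}(‖v_{1j} − v_{2j}‖ + ‖ψ_{1j} − ψ_{2j}‖). (Regularity) For each j ≤ 0, 𝒲₀(𝐯,𝛙) is continuously differentiable with respect to the coordinate (v_j, ψ_j) in B_{R,b}. (Reduction) Let r ≥ 0 be such that 𝒜(B_H(r)) ⊆ B_H(R) and let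 u ∈ 𝒜(B_H(r)) be written u = v₀ + 𝒲₀(𝐔) for some 𝐔 = (𝐯,𝛙) ∈ 𝐁_{R,b}; define T₀(𝐯,𝛙) = 𝖯_N S(v₀ + 𝒲₀(𝐯,𝛙)), T(𝐔) = (T₀(𝐔), 0), φ_k = 𝖯_N η_k, ψ_k = (I − 𝖯_N)η_k, and the Markov chain ϒ⁰ = 𝐔, ϒ^k = (ϒ^{k−1}, T(ϒ^{k−1}) + (φ_k, ψ_k)). Then ℙ{ϒ^k(𝐔) ∈ 𝐁_{R,b} for all k ≥ 0} = 1, and for any bounded measurable f : H^k → ℝ of the form f(u₁,…,u_k) = F(𝖯_N u₁,…,𝖯_N u_k) one has 𝔼_u f(u₁,…,u_k) = 𝔼_𝐔 𝐟(ϒ^k), where 𝐟(𝐯,𝛙) = F(v_{1−k},…,v₀) and 𝔼_u, 𝔼_𝐔 refer to the chains u_k = S(u_{k−1}) + η_k starting at u and ϒ^k starting at 𝐔, respectively. -/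
open MeasureTheory ProbabilityTheory Filter Topology BoundedContinuousFunction
open scoped ENNReal NNReal Pointwise

noncomputable section

/-- The sets `𝒜_k(B)`: `𝒜_0(B) = B`, `𝒜_k(B) = S(𝒜_{k-1}(B)) + 𝒦`. -/
def attain {H : Type*} [AddCommGroup H] (S : H → H) (K : Set H) (B : Set H) : ℕ → Set H
  | 0 => B
  | n + 1 => S '' attain S K B n + K

/-- The domain of attainability `𝒜(B)` from `B`: the closure of `⋃_k 𝒜_k(B)`. -/
def attainDom {H : Type*} [AddCommGroup H] [TopologicalSpace H]
    (S : H → H) (K : Set H) (B : Set H) : Set H :=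
  closure (⋃ n, attain S K B n)

variable {H : Type} [NormedAddCommGroup H] [InnerProductSpace ℝ H] [CompleteSpace H]

/-- The orthogonal projection `𝖯_N` onto the span of the first `N` vectors of an orthonormal
basis. -/
def projB (e : HilbertBasis ℕ ℝ H) (N : ℕ) (u : H) : H :=
  ∑ j ∈ Finset.range N, e.repr u j • (e j : H)

/-- Condition (A): regularity and stability. -/
def CondA (S : H → H) : Prop :=
  ContDiff ℝ 1 S ∧
  ∀ R r : ℝ, 0 < r → r < R →
    ∃ C : ℝ, 0 < C ∧ ∃ a : ℝ, 0 < a ∧ a < 1 ∧ ∃ n₀ : ℕ, 1 ≤ n₀ ∧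
      (∀ u₁ ∈ Metric.closedBall (0 : H) R, ∀ u₂ ∈ Metric.closedBall (0 : H) R,
          ‖S u₁ - S u₂‖ ≤ C * ‖u₁ - u₂‖) ∧
      ∀ u ∈ Metric.closedBall (0 : H) R, ∀ n : ℕ, n₀ ≤ n →
          ‖S^[n] u‖ ≤ max (a * ‖u‖) r

/-- Condition (B): dissipativity. -/
def CondB (S : H → H) (K : Set H) : Prop :=
  ∃ ρ : ℝ, 0 < ρ ∧ ∃ k₀ : ℝ → ℕ, Monotone k₀ ∧
    ∀ R : ℝ, 0 ≤ R → ∀ k : ℕ, k₀ R ≤ k →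
      attain S K (Metric.closedBall 0 R) k ⊆ Metric.closedBall (0 : H) ρ

/-- Condition (C): squeezing. -/
def CondC (S : H → H) (e : HilbertBasis ℕ ℝ H) : Prop :=
  ∀ R : ℝ, 0 < R → ∃ γ : ℕ → ℝ, (∀ N, 0 < γ N) ∧ Antitone γ ∧
    Tendsto γ atTop (𝓝 0) ∧
    ∀ N : ℕ, ∀ u₁ ∈ Metric.closedBall (0 : H) R, ∀ u₂ ∈ Metric.closedBall (0 : H) R,
      ‖(S u₁ - S u₂) - projB e N (S u₁ - S u₂)‖ ≤ γ N * ‖u₁ - u₂‖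

/-- Condition (D): structure of the noise, `η_k = ∑_j b_j ξ_{jk} e_j` with `∑ b_j² < ∞`,
independent scalar `ξ_{jk}` whose laws have Lipschitz densities `p_j` with `p_j(0) > 0` and
support in `[-1,1]`. -/
def CondD [MeasurableSpace H] {Ω : Type*} [MeasurableSpace Ω] (P : Measure Ω)
    (e : HilbertBasis ℕ ℝ H) (η : ℕ → Ω → H)
    (b : ℕ → ℝ) (ξ : ℕ → ℕ → Ω → ℝ) (p : ℕ → ℝ → ℝ) : Prop :=
  (∀ j, 0 ≤ b j) ∧ Summable (fun j => (b j) ^ 2) ∧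
  (∀ k ω, HasSum (fun j => (b j * ξ j k ω) • (e j : H)) (η k ω)) ∧
  (∀ j k, Measurable (ξ j k)) ∧
  iIndepFun (fun jk : ℕ × ℕ => ξ jk.1 jk.2) P ∧
  (∀ j k, Measure.map (ξ j k) P
      = (volume : Measure ℝ).withDensity fun x => ENNReal.ofReal (p j x)) ∧
  (∀ j, ∃ L : ℝ≥0, LipschitzWith L (p j)) ∧
  (∀ j, 0 < p j 0) ∧
  (∀ j, Function.support (p j) ⊆ Set.Icc (-1 : ℝ) 1)

/-- The trajectory `u_k = S(u_{k-1}) + η_k` of the random dynamical system issued from `u₀`. -/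
def traj {Ω : Type*} (S : H → H) (η : ℕ → Ω → H) (u₀ : Ω → H) : ℕ → Ω → H
  | 0 => u₀
  | k + 1 => fun ω => S (traj S η u₀ k ω) + η (k + 1) ω

/-- The (topological) support of a measure. -/
def msupp {X : Type*} [TopologicalSpace X] [MeasurableSpace X] (μ : Measure X) : Set X :=
  {x | ∀ U ∈ 𝓝 x, 0 < μ U}

/-- The occupation measures `ζ_k = k⁻¹ ∑_{n=0}^{k-1} δ_{x_n}` of a sequence. -/
def occ {X : Type*} [MeasurableSpace X] (x : ℕ → X) (k : ℕ) : ProbabilityMeasure X :=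
  if hk : k = 0 then ⟨Measure.dirac (x 0), Measure.dirac.isProbabilityMeasure⟩
  else
    ⟨(k : ℝ≥0∞)⁻¹ • ∑ n ∈ Finset.range k, Measure.dirac (x n), by
      refine ⟨?_⟩
      simp only [Measure.smul_apply, Measure.finset_sum_apply, measure_univ,
        Finset.sum_const, Finset.card_range, nsmul_eq_mul, mul_one, smul_eq_mul]
      exact ENNReal.inv_mul_cancel (Nat.cast_ne_zero.mpr hk) (ENNReal.natCast_ne_top k)⟩

/-- Large deviation principle for the sequence of events `prob k` (the laws of random
probability measures in `Z`), with rate function `I`. -/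
def LDPof {Z : Type*} [TopologicalSpace Z] (prob : ℕ → Set Z → ℝ≥0∞) (I : Z → ℝ≥0∞) : Prop :=
  (∀ F : Set Z, IsClosed F →
    Filter.limsup (fun k : ℕ => (((k : ℝ)⁻¹ : ℝ) : EReal) * ENNReal.log (prob k F)) atTop
      ≤ -(⨅ σ ∈ F, (I σ : EReal))) ∧
  (∀ G : Set Z, IsOpen G →
    -(⨅ σ ∈ G, (I σ : EReal))
      ≤ Filter.liminf (fun k : ℕ => (((k : ℝ)⁻¹ : ℝ) : EReal) * ENNReal.log (prob k G)) atTop)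

/-- A good rate function: lower semicontinuous with compact level sets. -/
def GoodRate {Z : Type*} [TopologicalSpace Z] (I : Z → ℝ≥0∞) : Prop :=
  LowerSemicontinuous I ∧ ∀ c : ℝ≥0∞, c ≠ ⊤ → IsCompact {σ : Z | I σ ≤ c}

/-- The closed "ball" `B_{R,b} = B_{H_N}(R) × B_{H_N^⊥}(b)`, realised inside `H × H`. -/
def ballRB {H : Type} [NormedAddCommGroup H] [InnerProductSpace ℝ H] [CompleteSpace H]
    (e : HilbertBasis ℕ ℝ H) (N : ℕ) (R bb : ℝ) : Set (H × H) :=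
  {x | ‖x.1‖ ≤ R ∧ projB e N x.1 = x.1 ∧ ‖x.2‖ ≤ bb ∧ projB e N x.2 = 0}

/-- The set `𝐁_{R,b} = (B_{R,b})^{ℤ₀}` of sequences (indexed by `n : ℕ`, `n` standing for the
index `j = -n ∈ ℤ₀`). -/
def ballSeq {H : Type} [NormedAddCommGroup H] [InnerProductSpace ℝ H] [CompleteSpace H]
    (e : HilbertBasis ℕ ℝ H) (N : ℕ) (R bb : ℝ) : Set (ℕ → H × H) :=
  {U | ∀ n : ℕ, U n ∈ ballRB e N R bb}

/-- Prepending an element to a sequence over `ℤ₀`: `(𝐔, a)` has `a` at the index `0` and the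
entries of `𝐔` shifted by one. -/
def consSeq {α : Type*} (a : α) (s : ℕ → α) : ℕ → α
  | 0 => a
  | n + 1 => s n


/-! ### Facts about the projection -/

lemma projB_eq (e : HilbertBasis ℕ ℝ H) (N : ℕ) (u : H) :
    projB e N u = (∑ j ∈ Finset.range N,
      (innerSL ℝ (e j : H)).smulRight (e j : H)) u := by
  simp [projB, ContinuousLinearMap.sum_apply, HilbertBasis.repr_apply_apply]

/-- The projection as a continuous linear map. -/
def projL (e : HilbertBasis ℕ ℝ H) (N : ℕ) : H →L[ℝ] H :=
  ∑ j ∈ Finset.range N, (innerSL ℝ (e j : H)).smulRight (e j : H)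

lemma projB_eq_projL (e : HilbertBasis ℕ ℝ H) (N : ℕ) (u : H) :
    projB e N u = projL e N u := projB_eq e N u

lemma inner_projB (e : HilbertBasis ℕ ℝ H) (N : ℕ) (u : H) (j : ℕ) (hj : j < N) :
    inner ℝ (e j) (projB e N u) = inner ℝ (e j) u := by
  have h := e.orthonormal
  rw [projB]
  simp only [HilbertBasis.repr_apply_apply]
  exact h.inner_right_sum (fun i => inner ℝ (e i) u) (Finset.mem_range.2 hj)

lemma projB_projB (e : HilbertBasis ℕ ℝ H) (N : ℕ) (u : H) :
    projB e N (projB e N u) = projB e N u := by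
  conv_lhs => rw [projB]
  conv_rhs => rw [projB]
  refine Finset.sum_congr rfl fun j hj => ?_
  rw [HilbertBasis.repr_apply_apply, HilbertBasis.repr_apply_apply,
    inner_projB e N u j (Finset.mem_range.1 hj)]

lemma projB_ortho (e : HilbertBasis ℕ ℝ H) (N : ℕ) (u : H) :
    inner ℝ (projB e N u) (u - projB e N u) = 0 := by
  conv_lhs => arg 2; rw [projB]
  rw [sum_inner]
  refine Finset.sum_eq_zero fun j hj => ?_
  rw [inner_smul_left, inner_sub_right, inner_projB e N u j (Finset.mem_range.1 hj)]
  simp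

lemma projB_pyth (e : HilbertBasis ℕ ℝ H) (N : ℕ) (u : H) :
    ‖u‖ ^ 2 = ‖projB e N u‖ ^ 2 + ‖u - projB e N u‖ ^ 2 := by
  have h := norm_add_sq_eq_norm_sq_add_norm_sq_of_inner_eq_zero _ _ (projB_ortho e N u)
  rw [add_sub_cancel] at h
  nlinarith

lemma norm_projB_le (e : HilbertBasis ℕ ℝ H) (N : ℕ) (u : H) : ‖projB e N u‖ ≤ ‖u‖ := by
  have h := projB_pyth e N u
  exact le_of_sq_le_sq (by nlinarith [sq_nonneg ‖u - projB e N u‖]) (norm_nonneg _)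

lemma norm_sub_projB_le (e : HilbertBasis ℕ ℝ H) (N : ℕ) (u : H) :
    ‖u - projB e N u‖ ≤ ‖u‖ := by
  have h := projB_pyth e N u
  exact le_of_sq_le_sq (by nlinarith [sq_nonneg ‖projB e N u‖]) (norm_nonneg _)

/-- The complementary projection. -/
def projQ (e : HilbertBasis ℕ ℝ H) (N : ℕ) : H →L[ℝ] H :=
  ContinuousLinearMap.id ℝ H - projL e N

lemma projQ_apply (e : HilbertBasis ℕ ℝ H) (N : ℕ) (u : H) :
    projQ e N u = u - projB e N u := by
  simp [projQ, projB_eq_projL]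

lemma projB_projQ (e : HilbertBasis ℕ ℝ H) (N : ℕ) (u : H) :
    projB e N (projQ e N u) = 0 := by
  have h := projB_projB e N u
  rw [projQ_apply]
  simp only [projB_eq_projL] at h ⊢
  rw [map_sub, h, sub_self]

/-! ### The map `W` -/

/-- Approximations of the map `W`. -/
def Wap (S : H → H) (e : HilbertBasis ℕ ℝ H) (N : ℕ) : ℕ → (ℕ → H × H) → H
  | 0 => fun _ => 0
  | m + 1 => fun U => projQ e N (S ((U 1).1 + Wap S e N m (fun n => U (n + 1)))) + (U 0).2

/-- The map `W`. -/
def Wlim (S : H → H) (e : HilbertBasis ℕ ℝ H) (N : ℕ) (U : ℕ → H × H) : H :=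
  limUnder atTop (fun m => Wap S e N m U)

lemma Wap_succ (S : H → H) (e : HilbertBasis ℕ ℝ H) (N m : ℕ) (U : ℕ → H × H) :
    Wap S e N (m + 1) U
      = projQ e N (S ((U 1).1 + Wap S e N m (fun n => U (n + 1)))) + (U 0).2 := rfl

lemma ballSeq_shift {e : HilbertBasis ℕ ℝ H} {N : ℕ} {R bb : ℝ} {U : ℕ → H × H}
    (hU : U ∈ ballSeq e N R bb) : (fun n => U (n + 1)) ∈ ballSeq e N R bb :=
  fun n => hU (n + 1)

lemma Wap_cont (S : H → H) (hS : Continuous S) (e : HilbertBasis ℕ ℝ H) (N m : ℕ) :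
    Continuous (Wap S e N m) := by
  induction m with
  | zero => exact continuous_const
  | succ m ih =>
    have h1 : Continuous fun U : ℕ → H × H => (fun n => U (n + 1)) := by fun_prop
    have h2 : Continuous fun U : ℕ → H × H => Wap S e N m (fun n => U (n + 1)) := ih.comp h1
    have : Continuous fun U : ℕ → H × H =>
      projQ e N (S ((U 1).1 + Wap S e N m (fun n => U (n + 1)))) + (U 0).2 := by fun_prop
    exact this

lemma Wap_projB (S : H → H) (e : HilbertBasis ℕ ℝ H) (N m : ℕ) {R bb : ℝ}
    {U : ℕ → H × H} (hU : U ∈ ballSeq e N R bb) : projB e N (Wap S e N m U) = 0 := by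
  cases m with
  | zero => simp [Wap, projB]
  | succ m =>
    have h1 := projB_projQ e N (S ((U 1).1 + Wap S e N m (fun n => U (n + 1))))
    have h2 := (hU 0).2.2.2
    rw [Wap_succ]
    rw [projB_eq_projL] at h1 h2 ⊢
    rw [map_add, h1, h2, add_zero]

section W

variable {S : H → H} {e : HilbertBasis ℕ ℝ H} {N : ℕ} {R bb M g κ : ℝ}

lemma mem_ball_aux {U : ℕ → H × H} (hU : U ∈ ballSeq e N R bb) {w : H} (hw : ‖w‖ ≤ M) (n : ℕ) :
    (U n).1 + w ∈ Metric.closedBall (0 : H) (R + M) := by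
  rw [mem_closedBall_zero_iff]
  exact (norm_add_le _ _).trans (add_le_add (hU n).1 hw)

lemma Wap_bound (hR : 0 < R) (hM : M = bb + ‖S 0‖ + 1) (hbb : 0 ≤ bb)
    (hg1 : g * (R + M) ≤ 1) (hg0 : 0 ≤ g)
    (hQ : ∀ u₁ ∈ Metric.closedBall (0 : H) (R + M), ∀ u₂ ∈ Metric.closedBall (0 : H) (R + M),
      ‖projQ e N (S u₁ - S u₂)‖ ≤ g * ‖u₁ - u₂‖) (m : ℕ) :
    ∀ U ∈ ballSeq e N R bb, ‖Wap S e N m U‖ ≤ M := by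
  have hM0 : 0 ≤ M := by rw [hM]; positivity
  induction m with
  | zero => intro U _; simpa [Wap] using hM0
  | succ m ih =>
    intro U hU
    have h1 := mem_ball_aux hU (ih _ (ballSeq_shift hU)) 1
    have h2 := hQ _ h1 0 (by simp; positivity)
    rw [map_sub, sub_zero] at h2
    rw [mem_closedBall_zero_iff] at h1
    have h3 : ‖projQ e N (S 0)‖ ≤ ‖S 0‖ := by
      rw [projQ_apply]; exact norm_sub_projB_le _ _ _
    have h4 := (hU 0).2.2.1
    rw [Wap_succ]
    set x := (U 1).1 + Wap S e N m (fun n => U (n + 1))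
    have h5 : ‖projQ e N (S x)‖ ≤ ‖projQ e N (S x) - projQ e N (S 0)‖ + ‖projQ e N (S 0)‖ := by
      simpa using norm_add_le (projQ e N (S x) - projQ e N (S 0)) (projQ e N (S 0))
    have h6 := norm_add_le (projQ e N (S x)) (U 0).2
    have h7 := mul_le_mul_of_nonneg_left h1 hg0
    linarith

lemma Wap_step
    (hg2 : g ≤ 1 / 2) (hg0 : 0 ≤ g)
    (hQ : ∀ u₁ ∈ Metric.closedBall (0 : H) (R + M), ∀ u₂ ∈ Metric.closedBall (0 : H) (R + M),
      ‖projQ e N (S u₁ - S u₂)‖ ≤ g * ‖u₁ - u₂‖)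
    (hb : ∀ m, ∀ U ∈ ballSeq e N R bb, ‖Wap S e N m U‖ ≤ M) (m : ℕ) :
    ∀ U ∈ ballSeq e N R bb, dist (Wap S e N m U) (Wap S e N (m + 1) U) ≤ (2 * M) / 2 / 2 ^ m := by
  induction m with
  | zero =>
    intro U hU
    have := hb 1 U hU
    simpa [Wap] using this
  | succ m ih =>
    intro U hU
    have hU' := ballSeq_shift hU
    have h1 := hQ _ (mem_ball_aux hU (hb m _ hU') 1) _ (mem_ball_aux hU (hb (m + 1) _ hU') 1)
    have h2 := ih _ hU'
    rw [dist_eq_norm] at h2 ⊢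
    rw [Wap_succ S e N (m + 1), Wap_succ S e N m, add_sub_add_right_eq_sub, ← map_sub]
    rw [add_sub_add_left_eq_sub] at h1
    refine h1.trans ?_
    calc _ ≤ 1 / 2 * ((2 * M) / 2 / 2 ^ m) :=
          mul_le_mul hg2 h2 (norm_nonneg _) (by norm_num)
      _ = _ := by rw [pow_succ]; field_simp

lemma bdd_aux {U₁ U₂ : ℕ → H × H} (h₁ : U₁ ∈ ballSeq e N R bb) (h₂ : U₂ ∈ ballSeq e N R bb)
    (hκ : 0 < κ) :
    BddAbove (Set.range fun n : ℕ => Real.exp (-κ * n) *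
            (‖(U₁ n).1 - (U₂ n).1‖ + ‖(U₁ n).2 - (U₂ n).2‖)) := by
  refine ⟨R + R + (bb + bb), ?_⟩
  rintro _ ⟨n, rfl⟩
  have a1 : Real.exp (-κ * n) ≤ 1 := by
    rw [Real.exp_le_one_iff]
    have : (0 : ℝ) ≤ κ * n := by positivity
    linarith
  have a2 := (norm_sub_le (U₁ n).1 (U₂ n).1).trans (add_le_add (h₁ n).1 (h₂ n).1)
  have a3 := (norm_sub_le (U₁ n).2 (U₂ n).2).trans (add_le_add (h₁ n).2.2.1 (h₂ n).2.2.1)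
  calc _ ≤ 1 * (‖(U₁ n).1 - (U₂ n).1‖ + ‖(U₁ n).2 - (U₂ n).2‖) :=
        mul_le_mul_of_nonneg_right a1 (by positivity)
    _ ≤ _ := by linarith

lemma Wap_lip
    (hκ : 0 < κ) (hg3 : g * Real.exp κ ≤ 1 / 2) (hg0 : 0 ≤ g)
    (hQ : ∀ u₁ ∈ Metric.closedBall (0 : H) (R + M), ∀ u₂ ∈ Metric.closedBall (0 : H) (R + M),
      ‖projQ e N (S u₁ - S u₂)‖ ≤ g * ‖u₁ - u₂‖)
    (hb : ∀ m, ∀ U ∈ ballSeq e N R bb, ‖Wap S e N m U‖ ≤ M) (m : ℕ) :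
    ∀ U₁ ∈ ballSeq e N R bb, ∀ U₂ ∈ ballSeq e N R bb,
      ‖Wap S e N m U₁ - Wap S e N m U₂‖ ≤ 3 * ⨆ n : ℕ, Real.exp (-κ * n) *
            (‖(U₁ n).1 - (U₂ n).1‖ + ‖(U₁ n).2 - (U₂ n).2‖) := by
  induction m with
  | zero =>
    intro U₁ _ U₂ _
    simp only [Wap, sub_self, norm_zero]
    exact mul_nonneg (by norm_num) (Real.iSup_nonneg fun n => by positivity)
  | succ m ih =>
    intro U₁ h₁ U₂ h₂
    have hB := bdd_aux h₁ h₂ hκ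
    set D := ⨆ n : ℕ, Real.exp (-κ * n) *
            (‖(U₁ n).1 - (U₂ n).1‖ + ‖(U₁ n).2 - (U₂ n).2‖) with hD
    have hD0 : 0 ≤ D := Real.iSup_nonneg fun n => by positivity
    have key : ∀ n : ℕ, Real.exp (-κ * n) *
            (‖(U₁ n).1 - (U₂ n).1‖ + ‖(U₁ n).2 - (U₂ n).2‖) ≤ D := fun n => le_ciSup hB n
    have k0 : ‖(U₁ 0).2 - (U₂ 0).2‖ ≤ D := by
      have := key 0
      simp only [Nat.cast_zero, mul_zero, Real.exp_zero, one_mul] at this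
      linarith [norm_nonneg ((U₁ 0).1 - (U₂ 0).1)]
    have ks : ∀ n : ℕ, Real.exp (-κ * n) *
        (‖(U₁ (n + 1)).1 - (U₂ (n + 1)).1‖ + ‖(U₁ (n + 1)).2 - (U₂ (n + 1)).2‖)
          ≤ Real.exp κ * D := by
      intro n
      have := mul_le_mul_of_nonneg_left (key (n + 1)) (Real.exp_nonneg κ)
      rw [← mul_assoc, ← Real.exp_add] at this
      have he : κ + -κ * ((n + 1 : ℕ) : ℝ) = -κ * n := by push_cast; ring
      rwa [he] at this
    have k1 : ‖(U₁ 1).1 - (U₂ 1).1‖ ≤ Real.exp κ * D := by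
      have := ks 0
      simp only [Nat.cast_zero, mul_zero, Real.exp_zero, one_mul, zero_add] at this
      linarith [norm_nonneg ((U₁ 1).2 - (U₂ 1).2)]
    have h3 := ih _ (ballSeq_shift h₁) _ (ballSeq_shift h₂)
    have h4 : (⨆ n : ℕ, Real.exp (-κ * n) *
        (‖(U₁ (n + 1)).1 - (U₂ (n + 1)).1‖ + ‖(U₁ (n + 1)).2 - (U₂ (n + 1)).2‖))
          ≤ Real.exp κ * D := ciSup_le ks
    have h5 := hQ _ (mem_ball_aux h₁ (hb m _ (ballSeq_shift h₁)) 1) _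
      (mem_ball_aux h₂ (hb m _ (ballSeq_shift h₂)) 1)
    rw [Wap_succ, Wap_succ, add_sub_add_comm, ← map_sub]
    rw [add_sub_add_comm] at h5
    set w1 := Wap S e N m fun n => U₁ (n + 1)
    set w2 := Wap S e N m fun n => U₂ (n + 1)
    have h6 : ‖(U₁ 1).1 - (U₂ 1).1 + (w1 - w2)‖ ≤ 4 * (Real.exp κ * D) := by
      refine (norm_add_le _ _).trans ?_
      linarith
    have h7 : g * ‖(U₁ 1).1 - (U₂ 1).1 + (w1 - w2)‖ ≤ 2 * D := by
      refine (mul_le_mul_of_nonneg_left h6 hg0).trans ?_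
      have := mul_le_mul_of_nonneg_right hg3 hD0
      nlinarith
    refine (norm_add_le _ _).trans ?_
    linarith

/-- The summary of the deterministic part. -/
lemma W_main (hS : ContDiff ℝ 1 S) (hR : 0 < R) (hM : M = bb + ‖S 0‖ + 1) (hbb : 0 ≤ bb)
    (hg1 : g * (R + M) ≤ 1) (hg0 : 0 ≤ g) (hg2 : g ≤ 1 / 2)
    (hκ : 0 < κ) (hg3 : g * Real.exp κ ≤ 1 / 2)
    (hQ : ∀ u₁ ∈ Metric.closedBall (0 : H) (R + M), ∀ u₂ ∈ Metric.closedBall (0 : H) (R + M),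
      ‖projQ e N (S u₁ - S u₂)‖ ≤ g * ‖u₁ - u₂‖) :
    ContinuousOn (Wlim S e N) (ballSeq e N R bb) ∧
    (∀ U ∈ ballSeq e N R bb, projB e N (Wlim S e N U) = 0) ∧
    (∀ U₁ ∈ ballSeq e N R bb, ∀ U₂ ∈ ballSeq e N R bb,
      ‖Wlim S e N U₁ - Wlim S e N U₂‖ ≤ 3 * ⨆ n : ℕ, Real.exp (-κ * n) *
            (‖(U₁ n).1 - (U₂ n).1‖ + ‖(U₁ n).2 - (U₂ n).2‖)) ∧
    (∀ U ∈ ballSeq e N R bb, Wlim S e N U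
      = projQ e N (S ((U 1).1 + Wlim S e N (fun n => U (n + 1)))) + (U 0).2) := by
  have hb := Wap_bound hR hM hbb hg1 hg0 hQ
  have hst := fun U hU m => Wap_step hg2 hg0 hQ hb m U hU
  have hlim : ∀ U ∈ ballSeq e N R bb,
      Tendsto (fun m => Wap S e N m U) atTop (𝓝 (Wlim S e N U)) := fun U hU =>
    (cauchySeq_of_le_geometric_two (hst U hU)).tendsto_limUnder
  have hdist : ∀ U ∈ ballSeq e N R bb, ∀ m,
      dist (Wap S e N m U) (Wlim S e N U) ≤ (2 * M) / 2 ^ m := fun U hU m =>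
    dist_le_of_le_geometric_two_of_tendsto (hst U hU) (hlim U hU) m
  refine ⟨?_, ?_, ?_, ?_⟩
  · have hu : TendstoUniformlyOn (Wap S e N) (Wlim S e N) atTop (ballSeq e N R bb) := by
      rw [Metric.tendstoUniformlyOn_iff]
      intro ε hε
      have h0 : Tendsto (fun m : ℕ => (2 * M) / (2 : ℝ) ^ m) atTop (𝓝 0) :=
        tendsto_const_nhds.div_atTop (tendsto_pow_atTop_atTop_of_one_lt (by norm_num))
      filter_upwards [h0.eventually_lt_const hε] with m hm U hU
      rw [dist_comm]
      exact (hdist U hU m).trans_lt hm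
    exact hu.continuousOn (Frequently.of_forall fun m => (Wap_cont S hS.continuous e N m).continuousOn)
  · intro U hU
    have h1 := ((projL e N).continuous.tendsto _).comp (hlim U hU)
    have h2 : (projL e N ∘ fun m => Wap S e N m U) = fun _ => 0 := by
      ext1 m
      have := Wap_projB S e N m hU
      rwa [projB_eq_projL] at this
    rw [h2] at h1
    rw [projB_eq_projL]
    exact tendsto_nhds_unique h1 tendsto_const_nhds
  · intro U₁ h₁ U₂ h₂
    exact le_of_tendsto ((hlim U₁ h₁).sub (hlim U₂ h₂)).norm
      (Eventually.of_forall fun m => Wap_lip hκ hg3 hg0 hQ hb m U₁ h₁ U₂ h₂)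
  · intro U hU
    have h1 := (hlim U hU).comp (tendsto_add_atTop_nat 1)
    have hc : Continuous fun w => projQ e N (S ((U 1).1 + w)) + (U 0).2 := by
      have := hS.continuous
      fun_prop
    exact tendsto_nhds_unique h1 ((hc.tendsto _).comp (hlim _ (ballSeq_shift hU)))

lemma ballSeq_update {U : ℕ → H × H} (hU : U ∈ ballSeq e N R bb) (n : ℕ) {x : H × H}
    (hx : x ∈ ballRB e N R bb) : Function.update U n x ∈ ballSeq e N R bb := by
  intro k
  by_cases h : k = n
  · subst h; simpa using hx
  · rw [Function.update_of_ne h]; exact hU k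

lemma W_smooth (hS : ContDiff ℝ 1 S)
    (hfix : ∀ U ∈ ballSeq e N R bb, Wlim S e N U
      = projQ e N (S ((U 1).1 + Wlim S e N (fun n => U (n + 1)))) + (U 0).2) (n : ℕ) :
    ∀ U ∈ ballSeq e N R bb,
      ContDiffOn ℝ 1 (fun x : H × H => Wlim S e N (Function.update U n x))
        (ballRB e N R bb) := by
  induction n with
  | zero =>
    intro U hU
    have : ContDiffOn ℝ 1 (fun x : H × H =>
        projQ e N (S ((U 1).1 + Wlim S e N (fun n => U (n + 1)))) + x.2) (ballRB e N R bb) :=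
      (contDiff_const.add contDiff_snd).contDiffOn
    refine this.congr fun x hx => ?_
    rw [hfix _ (ballSeq_update hU 0 hx)]
    simp
  | succ n ih =>
    intro U hU
    have h1 := ih _ (ballSeq_shift hU)
    have h2 : ContDiff ℝ 1 fun x : H × H => (Function.update U (n + 1) x 1).1 := by
      by_cases h : n = 0
      · subst h
        simpa using contDiff_fst
      · have : (1 : ℕ) ≠ n + 1 := by omega
        simp only [Function.update_of_ne this]
        exact contDiff_const
    have h3 : ContDiffOn ℝ 1 (fun x : H × H => projQ e N (S ((Function.update U (n + 1) x 1).1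
        + Wlim S e N (Function.update (fun k => U (k + 1)) n x))) + (U 0).2)
        (ballRB e N R bb) :=
      (((projQ e N).contDiff.comp hS).comp_contDiffOn (h2.contDiffOn.add h1)).add contDiffOn_const
    refine h3.congr fun x hx => ?_
    rw [hfix _ (ballSeq_update hU (n + 1) hx)]
    have h4 : (fun k => Function.update U (n + 1) x (k + 1))
        = Function.update (fun k => U (k + 1)) n x := by
      ext1 k
      by_cases h : k = n
      · subst h; simp
      · rw [Function.update_of_ne h, Function.update_of_ne (by omega)]
    rw [h4, Function.update_of_ne (by omega : (0 : ℕ) ≠ n + 1)]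

end W

/-! ### Attainability and noise -/

lemma attainDom_step {S : H → H} (hS : Continuous S) {K B : Set H} {u h : H}
    (hu : u ∈ attainDom S K B) (hh : h ∈ K) : S u + h ∈ attainDom S K B := by
  have hc : Continuous fun x => S x + h := by fun_prop
  refine map_mem_closure (f := fun x => S x + h) hc hu ?_
  intro x hx
  obtain ⟨n, hn⟩ := Set.mem_iUnion.1 hx
  exact Set.mem_iUnion.2 ⟨n + 1, Set.add_mem_add (Set.mem_image_of_mem S hn) hh⟩

section noise

variable [SecondCountableTopology H] [MeasurableSpace H] [BorelSpace H]
    {Ω : Type} [MeasurableSpace Ω] {P : Measure Ω} [IsProbabilityMeasure P]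
    {e : HilbertBasis ℕ ℝ H}
    {η : ℕ → Ω → H} {b : ℕ → ℝ} {ξ : ℕ → ℕ → Ω → ℝ} {p : ℕ → ℝ → ℝ}

lemma noise_ident (hηmeas : ∀ k, Measurable (η k)) (hD : CondD P e η b ξ p) (k : ℕ) :
    Measure.map (η k) P = Measure.map (η 1) P := by
  obtain ⟨-, -, hsum, hmeas, hind, hlaw, -⟩ := hD
  have hi : ∀ k, iIndepFun (fun j => ξ j k) P := fun k =>
    hind.precomp (g := fun j : ℕ => (j, k)) (fun a b h => (Prod.mk.inj h).1)
  have hid : IdentDistrib (fun ω j => ξ j k ω) (fun ω j => ξ j 1 ω) P P :=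
    IdentDistrib.pi (fun j => ⟨(hmeas j k).aemeasurable, (hmeas j 1).aemeasurable, by
      rw [hlaw, hlaw]⟩) (hi k) (hi 1)
  set G : (ℕ → ℝ) → H := fun x => limUnder atTop
    (fun n : ℕ => ∑ j ∈ Finset.range n, (b j * x j) • (e j : H)) with hG
  have hGm : StronglyMeasurable G := by
    refine StronglyMeasurable.limUnder fun n => ?_
    apply Measurable.stronglyMeasurable
    fun_prop
  have hη : ∀ k, η k = G ∘ fun ω j => ξ j k ω := by
    intro k
    ext1 ω
    exact ((hsum k ω).tendsto_sum_nat.limUnder_eq).symm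
  rw [hη k, hη 1]
  exact (hid.comp hGm.measurable).map_eq

lemma noise_supp (hηmeas : ∀ k, Measurable (η k)) (hD : CondD P e η b ξ p) (k : ℕ) :
    ∀ᵐ ω ∂P, η k ω ∈ msupp (Measure.map (η 1) P) := by
  have h : ∀ᵐ x ∂(Measure.map (η k) P), x ∈ msupp (Measure.map (η 1) P) := by
    rw [noise_ident hηmeas hD k]
    have h1 := Measure.support_mem_ae (μ := Measure.map (η 1) P)
    filter_upwards [h1] with x hx
    exact (Measure.mem_support_iff_forall x).1 hx
  exact ae_of_ae_map (hηmeas k).aemeasurable h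

lemma noise_norm (hD : CondD P e η b ξ p) (k : ℕ) :
    ∀ᵐ ω ∂P, ‖η k ω‖ ≤ Real.sqrt (∑' j, (b j) ^ 2) := by
  obtain ⟨hb0, hbs, hsum, hmeas, hind, hlaw, -, -, hsupp⟩ := hD
  have h1 : ∀ j, ∀ᵐ ω ∂P, ξ j k ω ∈ Set.Icc (-1 : ℝ) 1 := by
    intro j
    refine ae_of_ae_map (hmeas j k).aemeasurable ?_
    rw [hlaw, ae_iff]
    change (volume.withDensity fun x => ENNReal.ofReal (p j x)) (Set.Icc (-1 : ℝ) 1)ᶜ = 0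
    rw [withDensity_apply _ measurableSet_Icc.compl]
    refine (setLIntegral_congr_fun (g := fun _ => 0) measurableSet_Icc.compl ?_).trans (by simp)
    intro x hx
    have : p j x = 0 := by
      by_contra h
      exact hx (hsupp j h)
    simp [this]
  filter_upwards [ae_all_iff.2 h1] with ω hω
  have hcoord : ∀ j, inner ℝ (e j) (η k ω) = b j * ξ j k ω := by
    intro j
    have h2 := (hsum k ω).mapL (innerSL ℝ (e j : H))
    have h3 : HasSum (fun i => innerSL ℝ (e j : H) ((b i * ξ i k ω) • (e i : H)))
        (innerSL ℝ (e j : H) ((b j * ξ j k ω) • (e j : H))) := by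
      refine hasSum_single j fun i hi => ?_
      simp [inner_smul_right, e.orthonormal.2 hi.symm]
    have h4 := h2.unique h3
    have h5 : ‖e j‖ = 1 := e.orthonormal.1 j
    simpa [inner_smul_right, real_inner_self_eq_norm_sq, h5] using h4
  have h6 := e.hasSum_inner_mul_inner (η k ω) (η k ω)
  rw [real_inner_self_eq_norm_sq] at h6
  apply Real.le_sqrt_of_sq_le
  refine hasSum_le (fun j => ?_) h6 hbs.hasSum
  rw [real_inner_comm, hcoord]
  have h7 := hω j
  have h8 : (ξ j k ω) ^ 2 ≤ 1 := by
    have := h7.1; have := h7.2; nlinarith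
  nlinarith [sq_nonneg (b j)]

end noise

/-- **Proposition 4.3 (Lyapunov–Schmidt reduction)**: under Conditions (A)–(D), with
`b = (∑ b_j²)^{1/2}`, for any `R > 0` and `κ > 0` there is `N* ≥ 1` such that for all
`N ≥ N*` there are `C > 0` and a continuous map `𝒲₀ : 𝐁_{R,b} → H_N^⊥` which is Lipschitz in
the exponentially weighted sup metric, continuously differentiable in each coordinate
`(v_j, ψ_j)`, and reduces the chain `u_k = S(u_{k-1}) + η_k` issued from
`u = v₀ + 𝒲₀(𝐔) ∈ 𝒜(B_H(r))` to the Markov chain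
`ϒ^k = (ϒ^{k-1}, T(ϒ^{k-1}) + (φ_k, ψ_k))` in the sequence space: `ϒ^k ∈ 𝐁_{R,b}` a.s. and
`𝔼_u F(𝖯_N u₁, …, 𝖯_N u_k) = 𝔼_𝐔 F(v_{1-k}, …, v₀)` for bounded measurable `F`. -/
theorem statement17
    {H : Type} [NormedAddCommGroup H] [InnerProductSpace ℝ H] [CompleteSpace H]
    [SecondCountableTopology H] [MeasurableSpace H] [BorelSpace H]
    {Ω : Type} [MeasurableSpace Ω] (P : Measure Ω) [IsProbabilityMeasure P]
    (S : H → H) (e : HilbertBasis ℕ ℝ H)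
    (η : ℕ → Ω → H) (hηmeas : ∀ k, Measurable (η k))
    (b : ℕ → ℝ) (ξ : ℕ → ℕ → Ω → ℝ) (p : ℕ → ℝ → ℝ)
    (K : Set H) (hK : K = msupp (Measure.map (η 1) P)) (hKcomp : IsCompact K)
    (hA : CondA S) (hB : CondB S K) (hC : CondC S e) (hD : CondD P e η b ξ p)
    (R κ : ℝ) (hR : 0 < R) (hκ : 0 < κ) :
    ∃ Nstar : ℕ, 1 ≤ Nstar ∧ ∀ N : ℕ, Nstar ≤ N →
      ∃ C : ℝ, 0 < C ∧
      ∃ W : (ℕ → H × H) → H,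
        -- `𝒲₀` is a continuous map `𝐁_{R,b} → H_N^⊥`
        ContinuousOn W (ballSeq e N R (Real.sqrt (∑' j, (b j) ^ 2))) ∧
        (∀ U ∈ ballSeq e N R (Real.sqrt (∑' j, (b j) ^ 2)), projB e N (W U) = 0) ∧
        -- Lipschitz continuity in the exponentially weighted sup metric
        (∀ U₁ ∈ ballSeq e N R (Real.sqrt (∑' j, (b j) ^ 2)),
          ∀ U₂ ∈ ballSeq e N R (Real.sqrt (∑' j, (b j) ^ 2)),
          ‖W U₁ - W U₂‖ ≤ C * ⨆ n : ℕ, Real.exp (-κ * n) *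
            (‖(U₁ n).1 - (U₂ n).1‖ + ‖(U₁ n).2 - (U₂ n).2‖)) ∧
        -- regularity: continuous differentiability in each coordinate `(v_j, ψ_j)`
        (∀ U ∈ ballSeq e N R (Real.sqrt (∑' j, (b j) ^ 2)), ∀ n : ℕ,
          ContDiffOn ℝ 1 (fun x : H × H => W (Function.update U n x))
            (ballRB e N R (Real.sqrt (∑' j, (b j) ^ 2)))) ∧
        -- reduction
        ∀ r : ℝ, 0 ≤ r →
          attainDom S K (Metric.closedBall (0 : H) r) ⊆ Metric.closedBall (0 : H) R →
          ∀ u ∈ attainDom S K (Metric.closedBall (0 : H) r),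
          ∀ U ∈ ballSeq e N R (Real.sqrt (∑' j, (b j) ^ 2)),
            u = (U 0).1 + W U →
            ∀ Υ : ℕ → Ω → (ℕ → H × H),
              (∀ ω, Υ 0 ω = U) →
              (∀ (k : ℕ) (ω : Ω), Υ (k + 1) ω =
                consSeq
                  (((projB e N (S ((Υ k ω 0).1 + W (Υ k ω))), (0 : H)))
                    + (projB e N (η (k + 1) ω),
                        η (k + 1) ω - projB e N (η (k + 1) ω)))
                  (Υ k ω)) →
              P {ω | ∀ k : ℕ, Υ k ω ∈
                  ballSeq e N R (Real.sqrt (∑' j, (b j) ^ 2))} = 1 ∧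
              ∀ (k : ℕ) (F : (Fin k → H) → ℝ), Measurable F →
                (∃ M : ℝ, ∀ x, |F x| ≤ M) →
                (∫ ω, F (fun i : Fin k =>
                    projB e N (traj S η (fun _ => u) (i.1 + 1) ω)) ∂P)
                  = ∫ ω, F (fun i : Fin k => ((Υ k ω) (k - 1 - i.1)).1) ∂P := by
  set bb := Real.sqrt (∑' j, (b j) ^ 2) with hbbdef
  have hbb : 0 ≤ bb := Real.sqrt_nonneg _
  set M := bb + ‖S 0‖ + 1 with hM
  have hM0 : 0 < M := by positivity
  obtain ⟨γ, hγ0, -, hγt, hγ⟩ := hC (R + M) (by positivity)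
  have hev : ∀ᶠ N in atTop, γ N < 1 / (R + M) ∧ γ N < 1 / 2 ∧ γ N < 1 / 2 / Real.exp κ :=
    (hγt.eventually_lt_const (by positivity)).and
      ((hγt.eventually_lt_const (by positivity)).and (hγt.eventually_lt_const (by positivity)))
  obtain ⟨N₀, hN₀⟩ := eventually_atTop.1 hev
  refine ⟨max 1 N₀, le_max_left _ _, fun N hN => ⟨3, by norm_num, Wlim S e N, ?_⟩⟩
  obtain ⟨g1, g2, g3⟩ := hN₀ N ((le_max_right _ _).trans hN)
  have hS := hA.1
  obtain ⟨w1, w2, w3, hfix⟩ := W_main (S := S) (e := e) (N := N) (g := γ N) hS hR hM hbb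
    ((le_div_iff₀ (by positivity)).1 g1.le) (hγ0 N).le g2.le hκ
    ((le_div_iff₀ (Real.exp_pos κ)).1 g3.le)
    (fun u₁ h₁ u₂ h₂ => by rw [projQ_apply]; exact hγ N u₁ h₁ u₂ h₂)
  refine ⟨w1, w2, w3, fun U hU n => W_smooth hS hfix n U hU, ?_⟩
  intro r hr hsub u hu U hU huU Υ hΥ0 hΥs
  have hae : ∀ᵐ ω ∂P, ∀ k, Υ k ω ∈ ballSeq e N R bb ∧
      traj S η (fun _ => u) k ω = (Υ k ω 0).1 + Wlim S e N (Υ k ω) ∧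
      traj S η (fun _ => u) k ω ∈ attainDom S K (Metric.closedBall (0 : H) r) := by
    filter_upwards [ae_all_iff.2 (noise_supp hηmeas hD), ae_all_iff.2 (noise_norm hD)] with ω h1 h2
    intro k
    induction k with
    | zero => rw [hΥ0]; exact ⟨hU, huU, hu⟩
    | succ k ih =>
      obtain ⟨i1, i2, i3⟩ := ih
      have hK' : η (k + 1) ω ∈ K := by rw [hK]; exact h1 (k + 1)
      have j3 : traj S η (fun _ => u) (k + 1) ω ∈ attainDom S K (Metric.closedBall (0 : H) r) :=
        attainDom_step hS.continuous i3 hK'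
      have htr : traj S η (fun _ => u) (k + 1) ω
          = S ((Υ k ω 0).1 + Wlim S e N (Υ k ω)) + η (k + 1) ω := by
        rw [← i2]; rfl
      have hfst : (Υ (k + 1) ω 0).1 = projB e N (traj S η (fun _ => u) (k + 1) ω) := by
        rw [hΥs, htr]
        simp only [consSeq, Prod.fst_add, projB_eq_projL, map_add]
      have hsnd : (Υ (k + 1) ω 0).2 = projQ e N (η (k + 1) ω) := by
        rw [hΥs, projQ_apply]
        simp only [consSeq, Prod.snd_add, zero_add]
      have htail : ∀ n, Υ (k + 1) ω (n + 1) = Υ k ω n := by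
        intro n; rw [hΥs]; rfl
      have j1 : Υ (k + 1) ω ∈ ballSeq e N R bb := by
        intro n
        cases n with
        | succ n => rw [htail]; exact i1 n
        | zero =>
          refine ⟨?_, ?_, ?_, ?_⟩
          · rw [hfst]
            exact (norm_projB_le _ _ _).trans (mem_closedBall_zero_iff.1 (hsub j3))
          · rw [hfst, projB_projB]
          · rw [hsnd, projQ_apply]
            exact (norm_sub_projB_le _ _ _).trans (h2 _)
          · rw [hsnd, projB_projQ]
      refine ⟨j1, ?_, j3⟩
      have h5 : (fun n => Υ (k + 1) ω (n + 1)) = Υ k ω := funext htail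
      have h6 : Υ (k + 1) ω 1 = Υ k ω 0 := htail 0
      rw [hfix _ j1, h5, h6, hsnd, hfst, htr, projQ_apply, projQ_apply]
      simp only [projB_eq_projL, map_add]
      abel
  constructor
  · have : {ω | ∀ k : ℕ, Υ k ω ∈ ballSeq e N R bb} =ᵐ[P] Set.univ := by
      rw [eventuallyEq_univ]
      filter_upwards [hae] with ω h k using (h k).1
    rw [measure_congr this, measure_univ]
  · intro k F _ _
    refine integral_congr_ae ?_
    filter_upwards [hae] with ω h
    have hsh : ∀ m j, Υ (m + j) ω j = Υ m ω 0 := by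
      intro m j
      induction j with
      | zero => rfl
      | succ j ih => rw [← add_assoc, hΥs]; exact ih
    congr 1
    ext1 i
    have h1 := hsh (i.1 + 1) (k - 1 - i.1)
    have h2 : i.1 + 1 + (k - 1 - i.1) = k := by have := i.2; omega
    rw [h2] at h1
    obtain ⟨a1, a2, -⟩ := h (i.1 + 1)
    rw [h1, a2, projB_eq_projL, map_add, ← projB_eq_projL, ← projB_eq_projL, w2 _ a1, add_zero]
    exact (a1 0).2.1
end
end

section
/- Under Conditions (A)–(D), the transition function P_k(u,Γ) of the chain u_k = S(u_{k−1}) + η_k satisfies: for every u ∈ 𝒜 and every r > 0, P_k(u, B_H(r)) > 0 for all sufficiently large k (this uses 0 ∈ supp 𝒟(η₁), which holds by Condition (D)). Consequently, if μ ∈ 𝒫(H) is the unique stationary measure of the chain (i.e. the unique μ with 𝔓₁*μ = μ), then the support of μ coincides with 𝒜. -/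
open MeasureTheory ProbabilityTheory Filter Topology BoundedContinuousFunction
open scoped ENNReal NNReal Pointwise

noncomputable section

variable {H : Type} [NormedAddCommGroup H] [InnerProductSpace ℝ H] [CompleteSpace H]

/-- The `k`-step transition function `P_k(u,Γ)` of the chain started at the deterministic
point `u`. -/
def transP {H : Type} [NormedAddCommGroup H] [InnerProductSpace ℝ H] [CompleteSpace H]
    {Ω : Type} [MeasurableSpace Ω] (P : Measure Ω) (S : H → H) (η : ℕ → Ω → H)
    (k : ℕ) (u : H) (Γ : Set H) : ℝ≥0∞ :=
  P {ω | traj S η (fun _ => u) k ω ∈ Γ}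

theorem orbit_tendsto {S : H → H} (hA : CondA S) (u : H) :
    Tendsto (fun n => S^[n] u) atTop (𝓝 0) := by
  rw [Metric.tendsto_atTop]
  intro ε hε
  obtain ⟨C, hC, a, ha, ha1, n₀, hn₀, -, h⟩ :=
    hA.2 (‖u‖ + ε) (ε / 2) (by positivity) (by linarith [norm_nonneg u])
  have key : ∀ m : ℕ, ‖S^[m * n₀] u‖ ≤ max (a ^ m * ‖u‖) (ε / 2) := by
    intro m
    induction m with
    | zero => simp
    | succ m ih =>
      have hb : S^[m * n₀] u ∈ Metric.closedBall (0 : H) (‖u‖ + ε) := by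
        rw [mem_closedBall_zero_iff]
        refine ih.trans (max_le ?_ (by linarith [norm_nonneg u]))
        have : a ^ m ≤ 1 := pow_le_one₀ ha.le ha1.le
        nlinarith [norm_nonneg u]
      have h1 := h _ hb n₀ le_rfl
      rw [← Function.iterate_add_apply] at h1
      rw [show (m + 1) * n₀ = n₀ + m * n₀ by ring]
      refine h1.trans (max_le ?_ (le_max_right _ _))
      rcases le_max_iff.1 ih with h2 | h2
      · refine le_trans ?_ (le_max_left _ _)
        rw [pow_succ']
        nlinarith
      · refine le_trans ?_ (le_max_right _ _)
        nlinarith [norm_nonneg (S^[m * n₀] u)]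
  obtain ⟨m, hm⟩ : ∃ m : ℕ, a ^ m * ‖u‖ < ε / 2 := by
    have : Tendsto (fun m : ℕ => a ^ m * ‖u‖) atTop (𝓝 (0 * ‖u‖)) :=
      (tendsto_pow_atTop_nhds_zero_of_lt_one ha.le ha1).mul_const _
    rw [zero_mul] at this
    exact ((this.eventually_lt_const (by positivity : (0:ℝ) < ε / 2))).exists
  refine ⟨m * n₀ + n₀, fun n hn => ?_⟩
  have hk : ‖S^[m * n₀] u‖ ≤ ε / 2 := (key m).trans (max_le hm.le le_rfl)
  have h1 := h (S^[m * n₀] u) (by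
    rw [mem_closedBall_zero_iff]; linarith [norm_nonneg u]) (n - m * n₀) (by omega)
  rw [← Function.iterate_add_apply, Nat.sub_add_cancel (by omega)] at h1
  rw [dist_zero_right]
  refine lt_of_le_of_lt h1 (max_lt ?_ (by linarith))
  nlinarith [norm_nonneg (S^[m * n₀] u)]

theorem xi_le_one {Ω : Type*} [MeasurableSpace Ω] {P : Measure Ω} {X : Ω → ℝ} {q : ℝ → ℝ}
    (hX : Measurable X)
    (hl : Measure.map X P = (volume : Measure ℝ).withDensity fun x => ENNReal.ofReal (q x))
    (hs : Function.support q ⊆ Set.Icc (-1 : ℝ) 1) : ∀ᵐ ω ∂P, |X ω| ≤ 1 := by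
  have h : ∀ᵐ x ∂(Measure.map X P), |x| ≤ 1 := by
    rw [hl, ae_iff]
    have : MeasurableSet {a : ℝ | ¬ |a| ≤ 1} :=
      (measurableSet_le (f := fun a : ℝ => |a|) (g := fun _ => 1) (by fun_prop)
        (by fun_prop)).compl
    rw [withDensity_apply _ this]
    rw [setLIntegral_congr_fun (g := fun _ => 0) this, lintegral_zero]
    intro x hx
    have : q x = 0 := by
      by_contra hne
      exact hx (abs_le.2 (hs hne))
    simp [this]
  exact ae_of_ae_map hX.aemeasurable h

theorem xi_pos {Ω : Type*} [MeasurableSpace Ω] {P : Measure Ω} {X : Ω → ℝ} {q : ℝ → ℝ}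
    (hX : Measurable X)
    (hl : Measure.map X P = (volume : Measure ℝ).withDensity fun x => ENNReal.ofReal (q x))
    (hq : Continuous q) (hs : 0 < q 0) {ε : ℝ} (hε : 0 < ε) : 0 < P (X ⁻¹' Metric.ball 0 ε) := by
  rw [← Measure.map_apply hX Metric.isOpen_ball.measurableSet, hl,
    withDensity_apply _ Metric.isOpen_ball.measurableSet]
  rw [setLIntegral_pos_iff (by fun_prop)]
  have hU : IsOpen ((Function.support fun x => ENNReal.ofReal (q x)) ∩ Metric.ball 0 ε) := by
    have : (Function.support fun x => ENNReal.ofReal (q x)) = q ⁻¹' Set.Ioi 0 := by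
      ext x; simp
    rw [this]
    exact (isOpen_Ioi.preimage hq).inter Metric.isOpen_ball
  exact hU.measure_pos _ ⟨0, by simpa using hs, by simpa using hε⟩

theorem noise_pos [MeasurableSpace H] {Ω : Type*} [MeasurableSpace Ω] {P : Measure Ω}
    [IsProbabilityMeasure P]
    {e : HilbertBasis ℕ ℝ H} {η : ℕ → Ω → H}
    {b : ℕ → ℝ} {ξ : ℕ → ℕ → Ω → ℝ} {p : ℕ → ℝ → ℝ} (hD : CondD P e η b ξ p)
    (k : ℕ) {δ : ℝ} (hδ : 0 < δ) : 0 < P {ω | η k ω ∈ Metric.ball (0 : H) δ} := by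
  obtain ⟨-, hsum, hη, hm, hind, hlaw, hlip, hp0, hps⟩ := hD
  have hnorm : ∀ ω, HasSum (fun j => (b j * ξ j k ω) ^ 2) (‖η k ω‖ ^ 2) := by
    intro ω
    have h1 := e.hasSum_inner_mul_inner (η k ω) (η k ω)
    rw [real_inner_self_eq_norm_sq] at h1
    have h2 : ∀ j, inner ℝ (e j : H) (η k ω) = b j * ξ j k ω := by
      intro j
      have h3 := (hη k ω).mapL (innerSL ℝ (e j : H))
      have h4 : HasSum (fun i => innerSL ℝ (e j : H) ((b i * ξ i k ω) • (e i : H)))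
          (b j * ξ j k ω) := by
        convert hasSum_single j ?_ using 1
        · simp [inner_smul_right, real_inner_self_eq_norm_sq, e.orthonormal.1 j]
        · intro i hi
          simp [inner_smul_right, e.orthonormal.2 hi.symm]
      exact h3.unique h4
    refine h1.congr_fun ?_
    intro j
    rw [real_inner_comm, h2, sq]
  obtain ⟨N, hN⟩ : ∃ N : ℕ, ∑' j, (b (j + N)) ^ 2 < δ ^ 2 / 2 :=
    ((tendsto_sum_nat_add (fun j => (b j) ^ 2)).eventually_lt_const (by positivity)).exists
  set B : ℝ := ∑ j ∈ Finset.range N, (b j) ^ 2 with hB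
  have hB0 : 0 ≤ B := Finset.sum_nonneg fun _ _ => sq_nonneg _
  set ε : ℝ := δ / (2 * (B + 1)) with hε
  have hε0 : 0 < ε := by positivity
  have hεB : ε ^ 2 * B ≤ δ ^ 2 / 4 := by
    rw [hε, div_pow, div_mul_eq_mul_div, div_le_div_iff₀ (by positivity) (by norm_num)]
    nlinarith [sq_nonneg δ, mul_nonneg (sq_nonneg δ) hB0, mul_nonneg (sq_nonneg δ) (sq_nonneg B)]
  have hae : ∀ᵐ ω ∂P, ∀ j, |ξ j k ω| ≤ 1 := by
    rw [ae_all_iff]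
    exact fun j => xi_le_one (hm j k) (hlaw j k) (hps j)
  have hpos : 0 < P (⋂ j ∈ Finset.range N, ξ j k ⁻¹' Metric.ball 0 ε) := by
    have hi : iIndepFun (fun j => ξ j k) P :=
      hind.precomp (g := fun j : ℕ => (j, k)) (fun i j h => (Prod.ext_iff.1 h).1)
    rw [hi.measure_inter_preimage_eq_mul (Finset.range N)
      (fun _ _ => Metric.isOpen_ball.measurableSet)]
    rw [pos_iff_ne_zero, Finset.prod_ne_zero_iff]
    intro j _
    obtain ⟨L, hL⟩ := hlip j
    exact (xi_pos (hm j k) (hlaw j k) hL.continuous (hp0 j) hε0).ne'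
  refine lt_of_lt_of_le hpos (measure_mono_ae ?_)
  filter_upwards [hae] with ω hω hmem
  change η k ω ∈ Metric.ball (0 : H) δ
  have hmem' : ∀ j < N, |ξ j k ω| < ε := by
    intro j hj
    have := Set.mem_iInter₂.1 hmem j (Finset.mem_range.2 hj)
    simpa using this
  rw [mem_ball_zero_iff]
  have hs := (hnorm ω).summable
  have e1 := hs.sum_add_tsum_nat_add N
  rw [(hnorm ω).tsum_eq] at e1
  have e2 : ∑ j ∈ Finset.range N, (b j * ξ j k ω) ^ 2 ≤ ε ^ 2 * B := by
    rw [hB, Finset.mul_sum]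
    refine Finset.sum_le_sum fun j hj => ?_
    have h5 := hmem' j (Finset.mem_range.1 hj)
    have h6 : ξ j k ω ^ 2 ≤ ε ^ 2 := sq_le_sq' (by linarith [(abs_lt.1 h5).1]) (abs_lt.1 h5).2.le
    rw [mul_pow]; nlinarith [sq_nonneg (b j)]
  have e3 : ∑' j, (b (j + N) * ξ (j + N) k ω) ^ 2 ≤ ∑' j, (b (j + N)) ^ 2 := by
    refine Summable.tsum_le_tsum (fun j => ?_) ((summable_nat_add_iff N).2 hs)
      ((summable_nat_add_iff N).2 hsum)
    have h5 := abs_le.1 (hω (j + N))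
    have h6 : ξ (j + N) k ω ^ 2 ≤ 1 := by nlinarith
    rw [mul_pow]; nlinarith [sq_nonneg (b (j + N))]
  refine lt_of_pow_lt_pow_left₀ 2 hδ.le ?_
  nlinarith [sq_nonneg δ]

theorem traj_meas_sup {S : H → H} (hS : Continuous S) [SecondCountableTopology H]
    [MeasurableSpace H] [BorelSpace H] {Ω : Type*} [mΩ : MeasurableSpace Ω] {P : Measure Ω}
    {e : HilbertBasis ℕ ℝ H} {η : ℕ → Ω → H}
    {b : ℕ → ℝ} {ξ : ℕ → ℕ → Ω → ℝ} {p : ℕ → ℝ → ℝ} (hD : CondD P e η b ξ p) (u : H) :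
    (∀ k, Measurable[⨆ i ∈ {i : ℕ × ℕ | i.2 = k},
      MeasurableSpace.comap (ξ i.1 i.2) inferInstance] (η k)) ∧
    ∀ k, Measurable[⨆ i ∈ {i : ℕ × ℕ | i.2 ≤ k},
      MeasurableSpace.comap (ξ i.1 i.2) inferInstance] (traj S η (fun _ => u) k) := by
  obtain ⟨-, -, hη, -⟩ := hD
  have h1 : ∀ k, Measurable[⨆ i ∈ {i : ℕ × ℕ | i.2 = k},
      MeasurableSpace.comap (ξ i.1 i.2) inferInstance] (η k) := by
    intro k
    let _ : MeasurableSpace Ω := ⨆ i ∈ {i : ℕ × ℕ | i.2 = k},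
      MeasurableSpace.comap (ξ i.1 i.2) inferInstance
    have hx : ∀ j, Measurable (ξ j k) := by
      intro j
      rw [measurable_iff_comap_le]
      exact le_iSup₂_of_le (f := fun (i : ℕ × ℕ) (_ : i ∈ {i : ℕ × ℕ | i.2 = k}) =>
        MeasurableSpace.comap (ξ i.1 i.2) inferInstance) (j, k) rfl le_rfl
    refine measurable_of_tendsto_metrizable (f := fun n ω =>
      ∑ j ∈ Finset.range n, (b j * ξ j k ω) • (e j : H)) (fun n => ?_) ?_
    · refine Finset.measurable_sum _ fun j _ => ?_
      exact ((hx j).const_mul (b j)).smul_const _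
    · rw [tendsto_pi_nhds]
      exact fun ω => (hη k ω).tendsto_sum_nat
  refine ⟨h1, fun k => ?_⟩
  induction k with
  | zero => exact measurable_const
  | succ k ih =>
    have i1 := ih.mono (biSup_mono (fun i (hi : i.2 ≤ k) => (Nat.le_succ_of_le hi : i.2 ≤ k + 1)))
      le_rfl
    have i2 := (h1 (k + 1)).mono
      (biSup_mono (fun i (hi : i.2 = k + 1) => (hi.le : i.2 ≤ k + 1))) le_rfl
    exact (hS.measurable.comp i1).add i2

theorem traj_pos {S : H → H} (hS : Continuous S) [SecondCountableTopology H]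
    [MeasurableSpace H] [BorelSpace H] {Ω : Type*} [mΩ : MeasurableSpace Ω] {P : Measure Ω}
    [IsProbabilityMeasure P]
    {e : HilbertBasis ℕ ℝ H} {η : ℕ → Ω → H}
    {b : ℕ → ℝ} {ξ : ℕ → ℕ → Ω → ℝ} {p : ℕ → ℝ → ℝ} (hD : CondD P e η b ξ p) (u : H) (k : ℕ) :
    ∀ U : Set H, IsOpen U → S^[k] u ∈ U → 0 < P {ω | traj S η (fun _ => u) k ω ∈ U} := by
  obtain ⟨hm1, hm2⟩ := traj_meas_sup hS hD u
  induction k with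
  | zero =>
    intro U _ hu
    have : {ω : Ω | traj S η (fun _ => u) 0 ω ∈ U} = Set.univ := by
      ext ω; simpa [traj] using hu
    rw [this, measure_univ]; exact one_pos
  | succ k ih =>
    intro U hU hu
    have hc : Continuous (fun x : H × H => S x.1 + x.2) := by fun_prop
    have hmem : (fun x : H × H => S x.1 + x.2) ⁻¹' U ∈ 𝓝 (S^[k] u, (0 : H)) := by
      refine (hU.preimage hc).mem_nhds ?_
      simpa [Function.iterate_succ_apply'] using hu
    rw [nhds_prod_eq, Filter.mem_prod_iff] at hmem
    obtain ⟨V, hV, W, hW, hVW⟩ := hmem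
    obtain ⟨V', hV'V, hV'o, hV'm⟩ := mem_nhds_iff.1 hV
    obtain ⟨δ, hδ, hδW⟩ := Metric.mem_nhds_iff.1 hW
    have hind : Indep (⨆ i ∈ {i : ℕ × ℕ | i.2 ≤ k},
          MeasurableSpace.comap (ξ i.1 i.2) inferInstance)
        (⨆ i ∈ {i : ℕ × ℕ | i.2 = k + 1},
          MeasurableSpace.comap (ξ i.1 i.2) inferInstance) P := by
      refine indep_iSup_of_disjoint (m := fun i : ℕ × ℕ =>
        MeasurableSpace.comap (ξ i.1 i.2) inferInstance) (fun i => (hD.2.2.2.1 i.1 i.2).comap_le) hD.2.2.2.2.1.iIndep ?_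
      rw [Set.disjoint_left]
      intro i (hi : i.2 ≤ k) (hi' : i.2 = k + 1)
      omega
    have := (Indep_iff _ _ P).1 hind _ _ (hm2 k hV'o.measurableSet)
      (hm1 (k + 1) (Metric.isOpen_ball (x := (0 : H)) (ε := δ)).measurableSet)
    refine lt_of_lt_of_le ?_ (measure_mono (s := traj S η (fun _ => u) k ⁻¹' V' ∩
      η (k + 1) ⁻¹' Metric.ball (0 : H) δ) ?_)
    · rw [this]
      exact ENNReal.mul_pos (ih V' hV'o hV'm).ne' (noise_pos hD (k + 1) hδ).ne'
    · rintro ω ⟨h1, h2⟩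
      exact hVW (Set.mk_mem_prod (hV'V h1) (hδW h2))

theorem image_ball_totallyBounded {S : H → H} {e : HilbertBasis ℕ ℝ H} (hA : CondA S)
    (hC : CondC S e) {ρ : ℝ} (hρ : 0 < ρ) :
    TotallyBounded (S '' Metric.closedBall (0 : H) ρ) := by
  obtain ⟨γ, hγ0, -, hγ, hγS⟩ := hC ρ hρ
  obtain ⟨C, hC0, -, -, -, -, -, hlip, -⟩ := hA.2 ρ (ρ / 2) (by linarith) (by linarith)
  have h0 : (0 : H) ∈ Metric.closedBall (0 : H) ρ := by simpa using hρ.le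
  rw [Metric.totallyBounded_iff]
  intro ε hε
  obtain ⟨N, hN⟩ : ∃ N, γ N * ρ < ε / 2 := by
    have : Tendsto (fun N => γ N * ρ) atTop (𝓝 (0 * ρ)) := hγ.mul_const _
    rw [zero_mul] at this
    exact (this.eventually_lt_const (by positivity)).exists
  let c : H →L[ℝ] (Fin N → ℝ) := ContinuousLinearMap.pi fun i => innerSL ℝ (e (i : ℕ) : H)
  let ψ : (Fin N → ℝ) → H := fun x => S 0 + ∑ i : Fin N, x i • (e (i : ℕ) : H)
  have hψ : Continuous ψ := by fun_prop
  have hcψ : ∀ v, ψ (c (v - S 0)) = S 0 + projB e N (v - S 0) := by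
    intro v
    simp only [ψ, c, projB, Finset.sum_range, HilbertBasis.repr_apply_apply]
    rfl
  have hbd : Bornology.IsBounded
      (c '' ((fun u => S u - S 0) '' Metric.closedBall (0 : H) ρ)) := by
    refine c.lipschitz.isBounded_image ?_
    refine (Metric.isBounded_closedBall (x := (0 : H)) (r := C * ρ)).subset ?_
    rintro _ ⟨u, hu, rfl⟩
    rw [mem_closedBall_zero_iff]
    refine (hlip u hu 0 h0).trans ?_
    rw [sub_zero]
    exact mul_le_mul_of_nonneg_left (mem_closedBall_zero_iff.1 hu) hC0.le
  have htb := (hbd.isCompact_closure.image hψ).totallyBounded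
  obtain ⟨t, ht, hcov⟩ := Metric.totallyBounded_iff.1 htb (ε / 2) (by positivity)
  refine ⟨t, ht, ?_⟩
  rintro _ ⟨u, hu, rfl⟩
  have hm : ψ (c (S u - S 0)) ∈ ψ '' closure
      (c '' ((fun u => S u - S 0) '' Metric.closedBall (0 : H) ρ)) :=
    ⟨_, subset_closure ⟨_, ⟨u, hu, rfl⟩, rfl⟩, rfl⟩
  obtain ⟨y, hy, hyd⟩ := Set.mem_iUnion₂.1 (hcov hm)
  refine Set.mem_iUnion₂.2 ⟨y, hy, ?_⟩
  rw [Metric.mem_ball] at hyd ⊢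
  have hd : dist (S u) (ψ (c (S u - S 0))) < ε / 2 := by
    rw [hcψ, dist_eq_norm]
    have h1 := hγS N u hu 0 h0
    rw [sub_zero] at h1
    have h2 : γ N * ‖u‖ ≤ γ N * ρ :=
      mul_le_mul_of_nonneg_left (mem_closedBall_zero_iff.1 hu) (hγ0 N).le
    rw [show S u - (S 0 + projB e N (S u - S 0)) = (S u - S 0) - projB e N (S u - S 0) by abel]
    linarith
  linarith [dist_triangle (S u) (ψ (c (S u - S 0))) y]

theorem attainDom_compact {S : H → H} {e : HilbertBasis ℕ ℝ H} {K : Set H} (hK : IsCompact K)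
    (hA : CondA S) (hB : CondB S K) (hC : CondC S e) :
    IsCompact (attainDom S K ({0} : Set H)) := by
  obtain ⟨ρ, hρ, k₀, -, hk⟩ := hB
  have hk' := hk 0 le_rfl
  rw [Metric.closedBall_zero] at hk'
  have hfin : ∀ n, IsCompact (attain S K ({0} : Set H) n) := by
    intro n
    induction n with
    | zero => exact isCompact_singleton
    | succ n ih => exact (ih.image hA.1.continuous).add hK
  have hD : IsCompact (closure (S '' Metric.closedBall (0 : H) ρ)) :=
    isCompact_iff_totallyBounded_isComplete.2
      ⟨(image_ball_totallyBounded hA hC hρ).closure, isClosed_closure.isComplete⟩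
  have hbig : IsCompact ((⋃ n ∈ Finset.range (k₀ 0 + 1), attain S K ({0} : Set H) n) ∪
      (closure (S '' Metric.closedBall (0 : H) ρ) + K)) :=
    ((Finset.range (k₀ 0 + 1)).isCompact_biUnion fun n _ => hfin n).union (hD.add hK)
  refine hbig.of_isClosed_subset isClosed_closure (closure_minimal ?_ hbig.isClosed)
  refine Set.iUnion_subset fun n => ?_
  by_cases hn : n < k₀ 0 + 1
  · exact (Set.subset_biUnion_of_mem (u := fun n => attain S K ({0} : Set H) n)
      (by simpa using hn)).trans Set.subset_union_left
  · obtain ⟨m, rfl⟩ : ∃ m, n = m + 1 := ⟨n - 1, by omega⟩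
    refine Set.Subset.trans ?_ Set.subset_union_right
    exact Set.add_subset_add ((Set.image_mono (hk' m (by omega))).trans subset_closure) le_rfl

theorem attainDom_inv {S : H → H} (hS : Continuous S) {K : Set H} {u w : H}
    (hu : u ∈ attainDom S K ({0} : Set H)) (hw : w ∈ K) :
    S u + w ∈ attainDom S K ({0} : Set H) := by
  have hc : Continuous fun u => S u + w := by fun_prop
  refine map_mem_closure (f := fun u => S u + w) hc hu ?_
  intro v hv
  obtain ⟨n, hn⟩ := Set.mem_iUnion.1 hv
  exact Set.mem_iUnion.2 ⟨n + 1, Set.add_mem_add ⟨v, hn, rfl⟩ hw⟩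

theorem kb_exists [SecondCountableTopology H] [MeasurableSpace H] [BorelSpace H]
    {S : H → H} (hS : Continuous S) (ν : ProbabilityMeasure H) {A K : Set H}
    (hA : IsCompact A) (h0 : (0 : H) ∈ A) (hν : ∀ᵐ w ∂(ν : Measure H), w ∈ K)
    (hinv : ∀ u ∈ A, ∀ w ∈ K, S u + w ∈ A) :
    ∃ m : ProbabilityMeasure H, (m : Measure H) A = 1 ∧
      Measure.map (fun x : H × H => S x.1 + x.2) ((m : Measure H).prod (ν : Measure H)) = m := by
  have hg : Continuous (fun x : H × H => S x.1 + x.2) := by fun_prop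
  let T : ProbabilityMeasure H → ProbabilityMeasure H := fun m =>
    (m.prod ν).map hg.measurable.aemeasurable
  have hTm : ∀ m, (T m : Measure H) =
      Measure.map (fun x : H × H => S x.1 + x.2) ((m : Measure H).prod (ν : Measure H)) := by
    intro m; rfl
  have hT : Continuous T :=
    (ProbabilityMeasure.continuous_map hg).comp
      (ProbabilityMeasure.continuous_prod.comp (continuous_id.prodMk continuous_const))
  have hTint : ∀ (m : ProbabilityMeasure H) (f : H →ᵇ ℝ),
      Integrable (fun u => ∫ w, f (S u + w) ∂(ν : Measure H)) (m : Measure H) ∧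
      ∫ x, f x ∂(T m : Measure H) = ∫ u, ∫ w, f (S u + w) ∂(ν : Measure H) ∂(m : Measure H) := by
    intro m f
    have hi : Integrable (fun x : H × H => f (S x.1 + x.2))
        ((m : Measure H).prod (ν : Measure H)) :=
      (f.compContinuous ⟨_, hg⟩).integrable _
    refine ⟨hi.integral_prod_left, ?_⟩
    rw [hTm, integral_map hg.measurable.aemeasurable
      f.continuous.stronglyMeasurable.aestronglyMeasurable, integral_prod _ hi]
  have hTA : ∀ m : ProbabilityMeasure H, (∀ᵐ u ∂(m : Measure H), u ∈ A) →
      ∀ᵐ u ∂(T m : Measure H), u ∈ A := by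
    intro m hm
    rw [hTm, ae_map_iff (p := fun u => u ∈ A) hg.measurable.aemeasurable hA.measurableSet]
    have h1 := (Measure.quasiMeasurePreserving_fst (μ := (m : Measure H))
      (ν := (ν : Measure H))).ae hm
    have h2 := (Measure.quasiMeasurePreserving_snd (μ := (m : Measure H))
      (ν := (ν : Measure H))).ae hν
    filter_upwards [h1, h2] with x hx1 hx2
    exact hinv _ hx1 _ hx2
  let δ : ℕ → ProbabilityMeasure H := fun i =>
    T^[i] ⟨Measure.dirac 0, Measure.dirac.isProbabilityMeasure⟩
  have hδs : ∀ i, δ (i + 1) = T (δ i) := fun i => Function.iterate_succ_apply' _ _ _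
  have hδA : ∀ i, ∀ᵐ u ∂(δ i : Measure H), u ∈ A := by
    intro i
    induction i with
    | zero =>
      change ∀ᵐ u ∂(Measure.dirac (0 : H)), u ∈ A
      rw [ae_dirac_iff (p := fun u => u ∈ A) hA.measurableSet]
      exact h0
    | succ i ih => rw [hδs]; exact hTA _ ih
  have hcast : ∀ n : ℕ, ((n : ℝ≥0∞) + 1) ≠ 0 ∧ ((n : ℝ≥0∞) + 1) ≠ ∞ := fun n => by
    constructor
    · simp
    · finiteness
  let av : ℕ → ProbabilityMeasure H := fun n =>
    ⟨((n : ℝ≥0∞) + 1)⁻¹ • ∑ i ∈ Finset.range (n + 1), (δ i : Measure H), by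
      refine ⟨?_⟩
      simp only [Measure.smul_apply, Measure.finsetSum_apply, measure_univ,
        Finset.sum_const, Finset.card_range, nsmul_eq_mul, mul_one, smul_eq_mul, Nat.cast_add,
        Nat.cast_one]
      exact ENNReal.inv_mul_cancel (hcast n).1 (hcast n).2⟩
  have havA : ∀ n, (av n : Measure H) Aᶜ = 0 := by
    intro n
    change (((n : ℝ≥0∞) + 1)⁻¹ • ∑ i ∈ Finset.range (n + 1), (δ i : Measure H)) Aᶜ = 0
    simp only [Measure.smul_apply, Measure.finsetSum_apply, smul_eq_mul]
    rw [Finset.sum_eq_zero, mul_zero]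
    intro i _
    exact hδA i
  have havint : ∀ n (h : H → ℝ), (∀ i, Integrable h (δ i : Measure H)) →
      ∫ x, h x ∂(av n : Measure H) =
        ((n : ℝ) + 1)⁻¹ * ∑ i ∈ Finset.range (n + 1), ∫ x, h x ∂(δ i : Measure H) := by
    intro n h hi
    change ∫ x, h x ∂(((n : ℝ≥0∞) + 1)⁻¹ • ∑ i ∈ Finset.range (n + 1), (δ i : Measure H)) = _
    rw [integral_smul_measure, integral_finsetSum_measure (fun i _ => hi i), smul_eq_mul]
    congr 1
    rw [ENNReal.toReal_inv, ENNReal.toReal_add (by finiteness) (by finiteness)]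
    simp
  have hcomp : IsCompact {μ : ProbabilityMeasure H | ∀ n : ℕ, μ Aᶜ ≤ (0 : ℝ≥0)} :=
    isCompact_setOfPred_probabilityMeasure_mass_eq_compl_isCompact_le (u := fun _ => 0)
      (K := fun _ => A) tendsto_const_nhds (fun _ => hA) (Or.inl inferInstance)
  let F : Ultrafilter ℕ := Ultrafilter.of atTop
  have hF : (F : Filter ℕ) ≤ atTop := Ultrafilter.of_le _
  obtain ⟨m, hmA, hm⟩ := hcomp.ultrafilter_le_nhds' (F.map av) (by
    refine Filter.Eventually.of_forall (f := (F : Filter ℕ)) fun n => ?_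
    intro _
    have := havA n
    simp [ProbabilityMeasure.coeFn_def, this])
  have hm' : Tendsto av F (𝓝 m) := hm
  refine ⟨m, ?_, ?_⟩
  · have h1 : m Aᶜ = 0 := le_antisymm (hmA 0) zero_le
    have h2 : (m : Measure H) Aᶜ = 0 := by
      rw [← ProbabilityMeasure.ennreal_coeFn_eq_coeFn_toMeasure, h1]; rfl
    rwa [prob_compl_eq_zero_iff hA.measurableSet] at h2
  · rw [← hTm]
    refine ext_of_forall_integral_eq_of_IsFiniteMeasure fun f => ?_
    have l1 := ProbabilityMeasure.tendsto_iff_forall_integral_tendsto.1 hm' f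
    have l2 := ProbabilityMeasure.tendsto_iff_forall_integral_tendsto.1
      ((hT.tendsto m).comp hm') f
    have l3 : Tendsto (fun n => ∫ x, f x ∂(T (av n) : Measure H) - ∫ x, f x ∂(av n : Measure H))
        F (𝓝 0) := by
      refine Tendsto.mono_left ?_ hF
      have hb : Tendsto (fun n : ℕ => (2 * ‖f‖) * (1 / ((n : ℝ) + 1))) atTop (𝓝 0) := by
        simpa using tendsto_one_div_add_atTop_nhds_zero_nat.const_mul (2 * ‖f‖)
      refine squeeze_zero_norm (fun n => ?_) hb
      rw [(hTint (av n) f).2, havint n _ (fun i => (hTint (δ i) f).1),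
        havint n _ (fun i => f.integrable _), ← mul_sub, ← Finset.sum_sub_distrib]
      have : ∀ i, ∫ u, ∫ w, f (S u + w) ∂(ν : Measure H) ∂(δ i : Measure H) =
          ∫ x, f x ∂(δ (i + 1) : Measure H) := by
        intro i; rw [hδs, (hTint (δ i) f).2]
      simp only [this]
      rw [Finset.sum_range_sub (fun i => ∫ x, f x ∂(δ i : Measure H)), norm_mul, mul_comm, one_div]
      have hfn : ∀ i, ‖∫ x, f x ∂(δ i : Measure H)‖ ≤ ‖f‖ := fun i =>
        f.norm_integral_le_norm _
      rw [Real.norm_of_nonneg (by positivity : (0 : ℝ) ≤ ((n : ℝ) + 1)⁻¹)]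
      refine mul_le_mul_of_nonneg_right ?_ (by positivity)
      refine (norm_sub_le _ _).trans ?_
      linarith [hfn (n + 1), hfn 0]
    have l4 := l2.sub l1
    have := tendsto_nhds_unique l4 l3
    linarith

/-- **Support of the stationary measure (end of Section 1.1)**: under Conditions (A)–(D) with
`b_j ≠ 0` (so that `0 ∈ supp 𝒟(η₁)`), for any `u ∈ 𝒜` and `r > 0` one has
`P_k(u, B_H(r)) > 0` for all sufficiently large `k`; consequently, if `μ` is the unique
stationary measure of the chain, then `supp μ = 𝒜`. -/
theorem statement19
    {H : Type} [NormedAddCommGroup H] [InnerProductSpace ℝ H] [CompleteSpace H]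
    [SecondCountableTopology H] [MeasurableSpace H] [BorelSpace H]
    {Ω : Type} [MeasurableSpace Ω] (P : Measure Ω) [IsProbabilityMeasure P]
    (S : H → H) (e : HilbertBasis ℕ ℝ H)
    (η : ℕ → Ω → H) (hηmeas : ∀ k, Measurable (η k))
    (b : ℕ → ℝ) (ξ : ℕ → ℕ → Ω → ℝ) (p : ℕ → ℝ → ℝ)
    (K : Set H) (hK : K = msupp (Measure.map (η 1) P)) (hKcomp : IsCompact K)
    (hA : CondA S) (hB : CondB S K) (hC : CondC S e) (hD : CondD P e η b ξ p)
    (hb : ∀ j, b j ≠ 0) :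
    -- positivity of the transition probabilities on balls around the origin
    (∀ u ∈ attainDom S K ({0} : Set H), ∀ r : ℝ, 0 < r →
      ∃ k₁ : ℕ, ∀ k : ℕ, k₁ ≤ k →
        0 < transP P S η k u (Metric.closedBall (0 : H) r)) ∧
    -- the unique stationary measure is supported exactly on `𝒜`
    ∀ μ : ProbabilityMeasure H,
      (∀ Γ : Set H, MeasurableSet Γ →
        (μ : Measure H) Γ = ∫⁻ u, transP P S η 1 u Γ ∂(μ : Measure H)) →
      (∀ μ' : ProbabilityMeasure H,
        (∀ Γ : Set H, MeasurableSet Γ →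
          (μ' : Measure H) Γ = ∫⁻ u, transP P S η 1 u Γ ∂(μ' : Measure H)) →
        μ' = μ) →
      ((μ : Measure H) (attainDom S K ({0} : Set H)) = 1 ∧
        ∀ U : Set H, IsOpen U → (U ∩ attainDom S K ({0} : Set H)).Nonempty →
          0 < (μ : Measure H) U) := by
  have hS : Continuous S := hA.1.continuous
  have hKs : K = (Measure.map (η 1) P).support := by
    rw [hK]; ext x; exact (Measure.mem_support_iff_forall x).symm
  have hPr : IsProbabilityMeasure (Measure.map (η 1) P) :=
    Measure.isProbabilityMeasure_map (hηmeas 1).aemeasurable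
  have h0K : (0 : H) ∈ K := by
    rw [hK]
    intro U hU
    obtain ⟨δ, hδ, hδU⟩ := Metric.mem_nhds_iff.1 hU
    refine lt_of_lt_of_le ?_ (measure_mono hδU)
    rw [Measure.map_apply (hηmeas 1) Metric.isOpen_ball.measurableSet]
    exact noise_pos hD 1 hδ
  refine ⟨?_, ?_⟩
  · intro u _ r hr
    have h1 := (orbit_tendsto hA u).eventually (Metric.ball_mem_nhds 0 hr)
    obtain ⟨k₁, hk₁⟩ := eventually_atTop.1 h1
    refine ⟨k₁, fun k hk => ?_⟩
    refine lt_of_lt_of_le (traj_pos hS hD u k (Metric.ball 0 r) Metric.isOpen_ball (hk₁ k hk)) ?_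
    exact measure_mono fun ω hω => Metric.ball_subset_closedBall hω
  intro μ hμ huniq
  have htr : ∀ (u : H) (Γ : Set H), MeasurableSet Γ → transP P S η 1 u Γ =
      Measure.map (η 1) P ((fun w => S u + w) ⁻¹' Γ) := by
    intro u Γ hΓ
    rw [Measure.map_apply (hηmeas 1) (hΓ.preimage (by fun_prop))]
    rfl
  constructor
  · obtain ⟨m, hm1, hm2⟩ := kb_exists hS ⟨Measure.map (η 1) P, hPr⟩
      (attainDom_compact hKcomp hA hB hC)
      (subset_closure (Set.mem_iUnion.2 ⟨0, rfl⟩))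
      (K := K) (by rw [hKs]; exact Measure.support_mem_ae)
      (fun u hu w hw => attainDom_inv hS hu hw)
    rw [← huniq m ?_]
    · exact hm1
    intro Γ hΓ
    have hg : Measurable (fun x : H × H => S x.1 + x.2) :=
      Continuous.measurable (by fun_prop)
    replace hm2 : Measure.map (fun x : H × H => S x.1 + x.2)
        ((m : Measure H).prod (Measure.map (η 1) P)) = m := hm2
    conv_lhs => rw [← hm2]
    rw [Measure.map_apply hg hΓ, Measure.prod_apply (hg hΓ)]
    refine lintegral_congr fun u => ?_
    rw [htr u Γ hΓ]
    rfl
  · have hstep : ∀ x ∈ (μ : Measure H).support, ∀ w ∈ K,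
        S x + w ∈ (μ : Measure H).support := by
      intro x hx w hw
      rw [Measure.mem_support_iff_forall] at hx ⊢
      rw [hK] at hw
      intro U₀ hU₀
      obtain ⟨U, hUU, hUo, hUm⟩ := mem_nhds_iff.1 hU₀
      refine lt_of_lt_of_le ?_ (measure_mono hUU)
      have hc : Continuous (fun x : H × H => S x.1 + x.2) := by fun_prop
      have hmem : (fun x : H × H => S x.1 + x.2) ⁻¹' U ∈ 𝓝 (x, w) :=
        (hUo.preimage hc).mem_nhds hUm
      rw [nhds_prod_eq, Filter.mem_prod_iff] at hmem
      obtain ⟨V₀, hV₀, W, hW, hVW⟩ := hmem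
      obtain ⟨V, hVV, hVo, hVm⟩ := mem_nhds_iff.1 hV₀
      rw [hμ U hUo.measurableSet]
      have hle : ∫⁻ _ in V, Measure.map (η 1) P W ∂(μ : Measure H) ≤
          ∫⁻ u, transP P S η 1 u U ∂(μ : Measure H) := by
        refine le_trans ?_ (setLIntegral_le_lintegral V _)
        refine setLIntegral_mono' hVo.measurableSet fun u hu => ?_
        rw [htr u U hUo.measurableSet]
        exact measure_mono fun w' hw' => hVW (Set.mk_mem_prod (hVV hu) hw')
      refine lt_of_lt_of_le ?_ hle
      rw [setLIntegral_const]
      exact ENNReal.mul_pos (hw W hW).ne' (hx V (hVo.mem_nhds hVm)).ne'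
    have hcl : IsClosed (μ : Measure H).support := Measure.isClosed_support
    obtain ⟨x, hx⟩ : (μ : Measure H).support.Nonempty :=
      Measure.nonempty_support (IsProbabilityMeasure.ne_zero _)
    have h0 : (0 : H) ∈ (μ : Measure H).support := by
      refine hcl.mem_of_tendsto (orbit_tendsto hA x) (Eventually.of_forall fun n => ?_)
      induction n with
      | zero => exact hx
      | succ n ih =>
        rw [Function.iterate_succ_apply']
        simpa using hstep _ ih 0 h0K
    have hsub : attainDom S K ({0} : Set H) ⊆ (μ : Measure H).support := by
      refine closure_minimal (Set.iUnion_subset fun n => ?_) hcl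
      induction n with
      | zero => exact Set.singleton_subset_iff.2 h0
      | succ n ih =>
        rintro _ ⟨_, ⟨y, hy, rfl⟩, w, hw, rfl⟩
        exact hstep y (ih hy) w hw
    rintro U hU ⟨x, hxU, hxA⟩
    exact (Measure.mem_support_iff_forall x).1 (hsub hxA) U (hU.mem_nhds hxU)
end
end
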